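/- arXiv:2601.10237 — 3 statements merged into one kernel-verified Lean document; each statement's English description precedes it below -/
import Mathlib

section
/- Let M ≥ 2 be an integer and let σ = s/√(ln M) for some real s with 0 < s ≤ 1/√2. Define a* := 1 − Φ(1/σ)^M. Then a* ≤ 1/√(4π·ln M). -/
open MeasureTheory Real

/-- The standard normal cumulative distribution function
`Φ(x) = (1/√(2π)) ∫_{−∞}^x e^{−t²/2} dt`. -/
noncomputable def stdNormalCDF (x : ℝ) : ℝ :=
  ∫ t in Set.Iic x, Real.exp (-t ^ 2 / 2) / Real.sqrt (2 * Real.pi)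

/-!
The Gaussian tail obeys the Mills-ratio bound `1 - Φ(x) ≤ φ(x) / x`, where `φ` is the standard
normal density, because `t / x ≥ 1` on the tail `t > x` and `t φ(t)` has antiderivative `-φ(t)`.
By Bernoulli's inequality `1 - Φ(x) ^ M ≤ M (1 - Φ(x))`. The condition on `s` says that
`1/σ ≥ √(2 log M)`, and `φ(√(2 log M)) = 1 / (M √(2π))`, so at this threshold the factor `M`
cancels.
-/

lemma one_sub_rpow_le_mul_one_sub {p r : ℝ} (hp : 0 ≤ p) (hr : 1 ≤ r) :
    1 - p ^ r ≤ r * (1 - p) := by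
  have hbernoulli := one_add_mul_self_le_rpow_one_add (s := p - 1) (by linarith) hr
  rw [add_sub_cancel] at hbernoulli
  linarith

lemma sqrt_two_mul_le_one_div_div_sqrt {s : ℝ} (L : ℝ) (hs0 : 0 < s) (hs : s ≤ 1 / √2) :
    √(2 * L) ≤ 1 / (s / √L) := by
  rw [one_div_div, sqrt_mul zero_le_two, le_div_iff₀ hs0]
  rw [le_div_iff₀' (by positivity)] at hs
  calc √2 * √L * s = (√2 * s) * √L := by ring
    _ ≤ √L := mul_le_of_le_one_left (sqrt_nonneg L) hs

section Gaussian

open ProbabilityTheory Set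
open scoped NNReal

lemma hasDerivAt_gaussianPDFReal (μ : ℝ) (v : ℝ≥0) (x : ℝ) :
    HasDerivAt (gaussianPDFReal μ v) (-((x - μ) / v * gaussianPDFReal μ v x)) x := by
  have hexponent : HasDerivAt (fun t : ℝ ↦ -(t - μ) ^ 2 / (2 * v)) (-((x - μ) / v)) x :=
    ((((hasDerivAt_id' x).sub_const μ).pow 2).neg.div_const _).congr_deriv (by ring)
  exact (hexponent.exp.const_mul _).congr_deriv (by rw [gaussianPDFReal]; ring)

lemma integrable_sub_mul_gaussianPDFReal (μ : ℝ) (v : ℝ≥0) :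
    Integrable (fun x ↦ (x - μ) * gaussianPDFReal μ v x) := by
  rcases eq_or_ne v 0 with rfl | hv
  · simp
  have hrate : 0 < (2 * (v : ℝ))⁻¹ := by positivity
  have hcentered := (integrable_mul_exp_neg_mul_sq hrate).const_mul (√(2 * π * v))⁻¹
  refine (hcentered.comp_sub_right μ).congr (.of_forall fun x ↦ ?_)
  have hexponent : -(x - μ) ^ 2 / (2 * v) = -(2 * (v : ℝ))⁻¹ * (x - μ) ^ 2 := by ring
  simp only [gaussianPDFReal, hexponent]
  ring

lemma integral_Ioi_sub_mul_gaussianPDFReal (μ : ℝ) (v : ℝ≥0) (x : ℝ) :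
    ∫ t in Ioi x, (t - μ) * gaussianPDFReal μ v t = v * gaussianPDFReal μ v x := by
  rcases eq_or_ne v 0 with rfl | hv
  · simp
  have hderiv : ∀ t ∈ Ici x, HasDerivAt (fun t ↦ -(v * gaussianPDFReal μ v t))
      ((t - μ) * gaussianPDFReal μ v t) t := fun t _ ↦
    ((hasDerivAt_gaussianPDFReal μ v t).const_mul (v : ℝ)).neg.congr_deriv (by field)
  have hint := (integrable_sub_mul_gaussianPDFReal μ v).integrableOn (s := Ioi x)
  have hlim := tendsto_zero_of_hasDerivAt_of_integrableOn_Ioi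
    (fun t ht ↦ hderiv t (Ioi_subset_Ici_self ht)) hint
    ((integrable_gaussianPDFReal μ v).const_mul _).neg.integrableOn
  rw [integral_Ioi_of_hasDerivAt_of_tendsto' hderiv hint hlim, zero_sub, neg_neg]

lemma gaussianReal_real_eq_integral (μ : ℝ) {v : ℝ≥0} (hv : v ≠ 0) (s : Set ℝ) :
    (gaussianReal μ v).real s = ∫ t in s, gaussianPDFReal μ v t := by
  rw [measureReal_def, gaussianReal_apply_eq_integral μ hv, ENNReal.toReal_ofReal]
  exact integral_nonneg fun t ↦ gaussianPDFReal_nonneg μ v t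

lemma gaussianReal_real_Ioi_le {μ x : ℝ} (v : ℝ≥0) (hx : μ < x) :
    (gaussianReal μ v).real (Ioi x) ≤ v * gaussianPDFReal μ v x / (x - μ) := by
  rcases eq_or_ne v 0 with rfl | hv
  · simp [measureReal_def, hx.le]
  have hx' : 0 < x - μ := sub_pos.2 hx
  calc (gaussianReal μ v).real (Ioi x) = ∫ t in Ioi x, gaussianPDFReal μ v t :=
        gaussianReal_real_eq_integral μ hv _
    _ ≤ ∫ t in Ioi x, (t - μ) * gaussianPDFReal μ v t / (x - μ) := by
        refine setIntegral_mono_on (integrable_gaussianPDFReal μ v).integrableOn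
          ((integrable_sub_mul_gaussianPDFReal μ v).div_const _).integrableOn
          measurableSet_Ioi fun t (ht : x < t) ↦ ?_
        rw [le_div_iff₀' hx']
        gcongr
        exact gaussianPDFReal_nonneg μ v t
    _ = v * gaussianPDFReal μ v x / (x - μ) := by
        rw [integral_div, integral_Ioi_sub_mul_gaussianPDFReal μ v]

lemma gaussianPDFReal_sqrt_two_mul_log {r : ℝ} (hr : 1 ≤ r) :
    gaussianPDFReal 0 1 √(2 * log r) = (√(2 * π))⁻¹ / r := by
  have hlog : 0 ≤ log r := log_nonneg hr
  have hexponent : -√(2 * log r) ^ 2 / 2 = -log r := by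
    rw [sq_sqrt (by positivity)]
    ring
  simp only [gaussianPDFReal, NNReal.coe_one, mul_one, sub_zero, hexponent]
  rw [exp_neg, exp_log (by positivity), div_eq_mul_inv]

end Gaussian

section StdNormalCDF

open ProbabilityTheory

lemma stdNormalCDF_eq_cdf : stdNormalCDF = cdf (gaussianReal 0 1) := by
  ext x
  rw [cdf_eq_real, gaussianReal_real_eq_integral 0 one_ne_zero]
  simp only [stdNormalCDF, gaussianPDFReal, NNReal.coe_one, mul_one, sub_zero, div_eq_inv_mul]

lemma stdNormalCDF_nonneg (x : ℝ) : 0 ≤ stdNormalCDF x := by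
  rw [stdNormalCDF_eq_cdf]
  exact cdf_nonneg _ x

lemma monotone_stdNormalCDF : Monotone stdNormalCDF := by
  rw [stdNormalCDF_eq_cdf]
  exact monotone_cdf _

lemma one_sub_stdNormalCDF_le {x : ℝ} (hx : 0 < x) :
    1 - stdNormalCDF x ≤ gaussianPDFReal 0 1 x / x := by
  rw [stdNormalCDF_eq_cdf, cdf_eq_real, ← probReal_compl_eq_one_sub measurableSet_Iic,
    Set.compl_Iic]
  simpa using gaussianReal_real_Ioi_le 1 hx

lemma one_sub_stdNormalCDF_sqrt_two_mul_log_rpow_le {r : ℝ} (hr : 1 < r) :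
    1 - stdNormalCDF √(2 * log r) ^ r ≤ 1 / √(4 * π * log r) := by
  have hlog : 0 < log r := log_pos hr
  have hsqrt : √(4 * π * log r) = √(2 * π) * √(2 * log r) := by
    rw [← sqrt_mul (by positivity)]
    ring_nf
  calc 1 - stdNormalCDF √(2 * log r) ^ r
      ≤ r * (1 - stdNormalCDF √(2 * log r)) :=
        one_sub_rpow_le_mul_one_sub (stdNormalCDF_nonneg _) hr.le
    _ ≤ r * (gaussianPDFReal 0 1 √(2 * log r) / √(2 * log r)) := by
        gcongr
        exact one_sub_stdNormalCDF_le (by positivity)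
    _ = 1 / √(4 * π * log r) := by
        rw [gaussianPDFReal_sqrt_two_mul_log hr.le, hsqrt]
        field

end StdNormalCDF

theorem astar_le_one_div_sqrt_four_pi_log_general
    (M : ℝ) (hM : 1 < M) (s σ : ℝ) (hs0 : 0 < s) (hs : s ≤ 1 / √2) (hσ : σ = s / √(log M)) :
    1 - stdNormalCDF (1 / σ) ^ M ≤ 1 / √(4 * π * log M) := by
  have hthreshold : √(2 * log M) ≤ 1 / σ := by
    rw [hσ]
    exact sqrt_two_mul_le_one_div_div_sqrt (log M) hs0 hs
  calc 1 - stdNormalCDF (1 / σ) ^ M ≤ 1 - stdNormalCDF √(2 * log M) ^ M := by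
        gcongr
        · exact stdNormalCDF_nonneg _
        · exact monotone_stdNormalCDF hthreshold
    _ ≤ 1 / √(4 * π * log M) := one_sub_stdNormalCDF_sqrt_two_mul_log_rpow_le hM

/-- Lemma 6.2: for `M ≥ 2` and `σ = s/√(ln M)` with `0 < s ≤ 1/√2`,
the quantity `a* = 1 − Φ(1/σ)^M` satisfies `a* ≤ 1/√(4π ln M)`. -/
theorem astar_le_one_div_sqrt_four_pi_log
    (M : ℕ) (hM : 2 ≤ M) (s σ : ℝ) (hs0 : 0 < s) (hs : s ≤ 1 / Real.sqrt 2)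
    (hσ : σ = s / Real.sqrt (Real.log M)) :
    1 - stdNormalCDF (1 / σ) ^ M ≤ 1 / Real.sqrt (4 * Real.pi * Real.log M) := by
  rw [← rpow_natCast]
  exact astar_le_one_div_sqrt_four_pi_log_general M (by exact_mod_cast hM) s σ hs0 hs hσ
end

section
/- Let f : [0,1] → [0,1] be continuous, convex, nonincreasing, and symmetric in the sense that f(f(α)) = α for all α ∈ [0,1]. Then f has a unique fixed point â with f(â) = â, this fixed point satisfies 0 < â ≤ 1/2, and max_{α∈[0,1]} ((1−α) − f(α))/√2 = (1 − 2â)/√2. Moreover, if f is not identically equal to the map α ↦ 1−α, then 0 < (1 − 2â)/√2 < 1/√2. -/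
open Real

/-! Convexity at the midpoint of `α` and `f α`, two points which `f` exchanges, puts that midpoint
weakly to the right of the fixed point `â`, where the nonincreasing graph of `f` crosses the
diagonal; hence `α + f α ≥ 2 * â`. In the other direction, `f` exchanges the endpoints `0` and `1`,
so the convex function `α + f α` takes the value `1` at both of them and is at most `1` between.
If `â = 1 / 2`, the two bounds coincide and `f` is the line `1 - α`. -/

section FixedPoints

open Function Set

variable {α : Type*}

theorem isFixedPt_le_of_antitoneOn_of_apply_le [LinearOrder α] {f : α → α} {s : Set α} {a x : α}
    (hf : AntitoneOn f s) (ha : a ∈ s) (hx : x ∈ s) (hfa : IsFixedPt f a) (hfx : f x ≤ x) :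
    a ≤ x := by
  by_contra! hxa
  have h : a ≤ f x := hfa.eq.symm.trans_le (hf hx ha hxa.le)
  exact (h.trans hfx).not_gt hxa

theorem isFixedPt_unique_of_antitoneOn [LinearOrder α] {f : α → α} {s : Set α} {a b : α}
    (hf : AntitoneOn f s) (ha : a ∈ s) (hb : b ∈ s) (hfa : IsFixedPt f a) (hfb : IsFixedPt f b) :
    a = b :=
  le_antisymm (isFixedPt_le_of_antitoneOn_of_apply_le hf ha hb hfa hfb.le)
    (isFixedPt_le_of_antitoneOn_of_apply_le hf hb ha hfb hfa.le)

theorem apply_isLeast_eq_of_antitoneOn_of_leftInvOn [PartialOrder α] {f : α → α} {s : Set α}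
    {a b : α} (hf : AntitoneOn f s) (hmaps : MapsTo f s s) (hinv : LeftInvOn f f s)
    (ha : IsLeast s a) (hb : IsGreatest s b) : f a = b := by
  refine le_antisymm (hb.2 (hmaps ha.1)) ?_
  calc b = f (f b) := (hinv hb.1).symm
    _ ≤ f a := hf ha.1 (hmaps hb.1) (ha.2 (hmaps hb.1))

end FixedPoints

section Convexity

open Function Set

theorem map_midpoint_le_of_convexOn {𝕜 E β : Type*} [Ring 𝕜] [LinearOrder 𝕜]
    [IsStrictOrderedRing 𝕜] [Invertible (2 : 𝕜)] [AddCommGroup E] [Module 𝕜 E]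
    [AddCommGroup β] [PartialOrder β] [Module 𝕜 β] {f : E → β} {s : Set E} {x y : E}
    (hf : ConvexOn 𝕜 s f) (hx : x ∈ s) (hy : y ∈ s) :
    f (midpoint 𝕜 x y) ≤ midpoint 𝕜 (f x) (f y) := by
  have half_nonneg : (0 : 𝕜) ≤ ⅟2 := invOf_nonneg.2 zero_le_two
  simpa only [midpoint_eq_smul_add, smul_add] using
    hf.2 hx hy half_nonneg half_nonneg invOf_two_add_invOf_two

theorem isMinOn_add_apply_of_isFixedPt {𝕜 E : Type*} [Ring 𝕜] [LinearOrder 𝕜]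
    [IsStrictOrderedRing 𝕜] [Invertible (2 : 𝕜)] [AddCommGroup E] [LinearOrder E]
    [IsOrderedAddMonoid E] [Module 𝕜 E] {f : E → E} {s : Set E} {a : E}
    (hconv : ConvexOn 𝕜 s f) (hanti : AntitoneOn f s) (hmaps : MapsTo f s s)
    (hinv : LeftInvOn f f s) (ha : a ∈ s) (hfa : IsFixedPt f a) :
    IsMinOn (fun x => x + f x) s a := by
  refine isMinOn_iff.2 fun x hx => ?_
  have hmid : f (midpoint 𝕜 x (f x)) ≤ midpoint 𝕜 x (f x) :=
    calc f (midpoint 𝕜 x (f x)) ≤ midpoint 𝕜 (f x) (f (f x)) :=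
          map_midpoint_le_of_convexOn hconv hx (hmaps hx)
      _ = midpoint 𝕜 x (f x) := by rw [hinv hx, midpoint_comm]
  have hle : a ≤ midpoint 𝕜 x (f x) :=
    isFixedPt_le_of_antitoneOn_of_apply_le hanti ha (hconv.1.midpoint_mem hx (hmaps hx)) hfa hmid
  calc a + f a = a + a := by rw [hfa.eq]
    _ ≤ midpoint 𝕜 x (f x) + midpoint 𝕜 x (f x) := add_le_add hle hle
    _ = x + f x := midpoint_add_self 𝕜 x (f x)

theorem add_apply_le_of_convexOn_of_swap {𝕜 : Type*} [Field 𝕜] [LinearOrder 𝕜]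
    [IsStrictOrderedRing 𝕜] {f : 𝕜 → 𝕜} {a b x : 𝕜} (hf : ConvexOn 𝕜 (Icc a b) f)
    (hfa : f a = b) (hfb : f b = a) (hx : x ∈ Icc a b) : x + f x ≤ a + b := by
  have hab : a ≤ b := hx.1.trans hx.2
  have h := ((convexOn_id hf.1).add hf).le_max_of_mem_Icc (left_mem_Icc.2 hab)
    (right_mem_Icc.2 hab) hx
  simpa only [Pi.add_apply, id_eq, hfa, hfb, add_comm b a, max_self] using h

end Convexity

/-- Lemma 5.3: a continuous, convex, nonincreasing trade-off function
`f : [0,1] → [0,1]` that is symmetric (`f(f(α)) = α` on `[0,1]`) has a unique fixed point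
`â ∈ (0, 1/2]`, the maximum of `((1−α) − f(α))/√2` over `[0,1]` equals `(1−2â)/√2`, and if
`f` is not the random-guessing line `α ↦ 1−α` then `0 < (1−2â)/√2 < 1/√2`. -/
theorem separation_at_fixed_point
    (f : ℝ → ℝ)
    (hmaps : Set.MapsTo f (Set.Icc 0 1) (Set.Icc 0 1))
    (hcont : ContinuousOn f (Set.Icc 0 1))
    (hconv : ConvexOn ℝ (Set.Icc 0 1) f)
    (hanti : AntitoneOn f (Set.Icc 0 1))
    (hsymm : ∀ α ∈ Set.Icc (0 : ℝ) 1, f (f α) = α) :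
    ∃ ahat : ℝ, ahat ∈ Set.Icc (0 : ℝ) 1 ∧ f ahat = ahat ∧ 0 < ahat ∧ ahat ≤ 1 / 2 ∧
      (∀ b ∈ Set.Icc (0 : ℝ) 1, f b = b → b = ahat) ∧
      IsGreatest ((fun α => ((1 - α) - f α) / Real.sqrt 2) '' Set.Icc 0 1)
        ((1 - 2 * ahat) / Real.sqrt 2) ∧
      ((¬ ∀ α ∈ Set.Icc (0 : ℝ) 1, f α = 1 - α) →
        0 < (1 - 2 * ahat) / Real.sqrt 2 ∧ (1 - 2 * ahat) / Real.sqrt 2 < 1 / Real.sqrt 2) := by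
  have f0 : f 0 = 1 := apply_isLeast_eq_of_antitoneOn_of_leftInvOn hanti hmaps hsymm
    (isLeast_Icc zero_le_one) (isGreatest_Icc zero_le_one)
  have f1 : f 1 = 0 := f0 ▸ hsymm 0 (Set.left_mem_Icc.2 zero_le_one)
  obtain ⟨a, ha, hfa : f a = a⟩ := exists_mem_Icc_isFixedPt_of_mapsTo hcont zero_le_one hmaps
  have hmin : ∀ α ∈ Set.Icc (0 : ℝ) 1, a + f a ≤ α + f α :=
    isMinOn_iff.1 (isMinOn_add_apply_of_isFixedPt hconv hanti hmaps hsymm ha hfa)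
  have hmax : ∀ α ∈ Set.Icc (0 : ℝ) 1, α + f α ≤ 0 + 1 :=
    fun α hα => add_apply_le_of_convexOn_of_swap hconv f0 f1 hα
  have ha_pos : 0 < a := ha.1.lt_of_ne (by rintro rfl; linarith)
  have hsqrt : 0 < √2 := sqrt_pos.2 zero_lt_two
  refine ⟨a, ha, hfa, ha_pos, by linarith [hmax a ha],
    fun b hb hfb => isFixedPt_unique_of_antitoneOn hanti hb ha hfb hfa,
    ⟨⟨a, ha, by simp only [hfa]; ring⟩, Set.forall_mem_image.2 fun α hα => ?_⟩, fun hne => ?_⟩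
  · exact div_le_div_of_nonneg_right (by linarith [hmin α hα]) hsqrt.le
  · have ha_lt : 2 * a < 1 := by
      by_contra! h
      exact hne fun α hα => by linarith [hmin α hα, hmax α hα]
    exact ⟨div_pos (by linarith) hsqrt, div_lt_div_of_pos_right (by linarith) hsqrt⟩
end

section
/- For ε ≥ 0 and δ ∈ [0,1), define f_{ε,δ} : [0,1] → ℝ by f_{ε,δ}(α) = max{0, 1 − δ − e^ε·α, e^{−ε}·(1 − δ − α)}. Then â := (1−δ)/(1+e^ε) satisfies f_{ε,δ}(â) = â, and sup_{α∈[0,1]} ((1−α) − f_{ε,δ}(α))/√2 = (e^ε − 1 + 2δ)/((1 + e^ε)·√2). -/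
open Real

/-- The tightest trade-off curve compatible with `(ε,δ)`-differential privacy:
`f_{ε,δ}(α) = max{0, 1 − δ − e^ε α, e^{−ε}(1 − δ − α)}`. -/
noncomputable def fEpsDelta (ε δ α : ℝ) : ℝ :=
  max 0 (max (1 - δ - Real.exp ε * α) (Real.exp (-ε) * (1 - δ - α)))

/-!
The two sloped pieces of `f_{ε,δ}` meet at `α = â`, where both equal `â`. Weighting them by
`1/(1+e^ε)` and `e^ε/(1+e^ε)` gives the line `β = 2â − α`, so the curve stays above the line of
slope `−1` through its fixed point, and `(1 − α) − f_{ε,δ}(α)` is largest there.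
-/

open Set Function

theorem isGreatest_image_separation {f : ℝ → ℝ} {s : Set ℝ} {a : ℝ} (ha : a ∈ s)
    (hfix : IsFixedPt f a) (hsupport : ∀ α ∈ s, 2 * a - α ≤ f α) :
    IsGreatest ((fun α => ((1 - α) - f α) / √2) '' s) ((1 - 2 * a) / √2) := by
  refine ⟨⟨a, ha, ?_⟩, ?_⟩
  · simp only [hfix.eq, two_mul, sub_sub]
  · rintro _ ⟨α, hα, rfl⟩
    have hgap : (1 - α) - f α ≤ 1 - 2 * a := by linarith [hsupport α hα]
    exact div_le_div_of_nonneg_right hgap (sqrt_nonneg 2)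

/-- The point `â = (1−δ)/(1+e^ε)` at which the curve `f_{ε,δ}` crosses the diagonal `β = α`. -/
noncomputable def epsDeltaFixedPoint (ε δ : ℝ) : ℝ :=
  (1 - δ) / (1 + exp ε)

section

variable (ε δ : ℝ)

theorem one_add_exp_mul_epsDeltaFixedPoint :
    (1 + exp ε) * epsDeltaFixedPoint ε δ = 1 - δ :=
  mul_div_cancel₀ _ (by positivity)

theorem one_sub_two_mul_epsDeltaFixedPoint :
    1 - 2 * epsDeltaFixedPoint ε δ = (exp ε - 1 + 2 * δ) / (1 + exp ε) := by
  unfold epsDeltaFixedPoint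
  field_simp
  ring

theorem two_mul_epsDeltaFixedPoint_sub_le_fEpsDelta (α : ℝ) :
    2 * epsDeltaFixedPoint ε δ - α ≤ fEpsDelta ε δ α := by
  have hpiece_exp : 1 - δ - exp ε * α ≤ fEpsDelta ε δ α :=
    (le_max_left _ _).trans (le_max_right _ _)
  have hpiece_exp_neg : 1 - δ - α ≤ exp ε * fEpsDelta ε δ α := by
    rw [← inv_mul_le_iff₀ (exp_pos ε), ← exp_neg]
    exact (le_max_right _ _).trans (le_max_right _ _)
  refine le_of_mul_le_mul_left ?_ (show 0 < 1 + exp ε by positivity)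
  calc (1 + exp ε) * (2 * epsDeltaFixedPoint ε δ - α)
      = (1 - δ - exp ε * α) + (1 - δ - α) := by
        linear_combination 2 * one_add_exp_mul_epsDeltaFixedPoint ε δ
    _ ≤ fEpsDelta ε δ α + exp ε * fEpsDelta ε δ α := add_le_add hpiece_exp hpiece_exp_neg
    _ = (1 + exp ε) * fEpsDelta ε δ α := by ring

variable {ε δ}

theorem epsDeltaFixedPoint_nonneg (hδ : δ ≤ 1) : 0 ≤ epsDeltaFixedPoint ε δ :=
  div_nonneg (sub_nonneg.2 hδ) (by positivity)

theorem epsDeltaFixedPoint_le_one (hδ : -exp ε ≤ δ) : epsDeltaFixedPoint ε δ ≤ 1 :=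
  div_le_one_of_le₀ (by linarith) (by positivity)

theorem isFixedPt_fEpsDelta (hδ : δ ≤ 1) :
    IsFixedPt (fEpsDelta ε δ) (epsDeltaFixedPoint ε δ) := by
  have hmul := one_add_exp_mul_epsDeltaFixedPoint ε δ
  have hpiece_exp : 1 - δ - exp ε * epsDeltaFixedPoint ε δ = epsDeltaFixedPoint ε δ := by
    linear_combination -hmul
  have hpiece_exp_neg : exp (-ε) * (1 - δ - epsDeltaFixedPoint ε δ) = epsDeltaFixedPoint ε δ := by
    rw [exp_neg, inv_mul_eq_iff_eq_mul₀ (exp_ne_zero ε)]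
    linear_combination -hmul
  rw [IsFixedPt, fEpsDelta, hpiece_exp, hpiece_exp_neg, max_self,
    max_eq_right (epsDeltaFixedPoint_nonneg hδ)]

end

theorem epsDelta_tradeoff_separation_general (ε δ : ℝ) (hδ : δ ∈ Icc (-exp ε) 1) :
    fEpsDelta ε δ ((1 - δ) / (1 + exp ε)) = (1 - δ) / (1 + exp ε) ∧
    IsGreatest ((fun α => ((1 - α) - fEpsDelta ε δ α) / √2) '' Icc 0 1)
      ((exp ε - 1 + 2 * δ) / ((1 + exp ε) * √2)) := by
  have hfix := isFixedPt_fEpsDelta (ε := ε) hδ.2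
  refine ⟨hfix, ?_⟩
  rw [← div_div, ← one_sub_two_mul_epsDeltaFixedPoint]
  exact isGreatest_image_separation
    ⟨epsDeltaFixedPoint_nonneg hδ.2, epsDeltaFixedPoint_le_one hδ.1⟩ hfix
    fun α _ => two_mul_epsDeltaFixedPoint_sub_le_fEpsDelta ε δ α

/-- Lemma E.2: for `ε ≥ 0` and `δ ∈ [0,1)`, the point
`â = (1−δ)/(1+e^ε)` is a fixed point of `f_{ε,δ}`, and
`sup_{α∈[0,1]} ((1−α) − f_{ε,δ}(α))/√2 = (e^ε − 1 + 2δ)/((1+e^ε)√2)`. -/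
theorem epsDelta_tradeoff_separation
    (ε δ : ℝ) (hε : 0 ≤ ε) (hδ : δ ∈ Set.Ico (0 : ℝ) 1) :
    fEpsDelta ε δ ((1 - δ) / (1 + Real.exp ε)) = (1 - δ) / (1 + Real.exp ε) ∧
    sSup ((fun α => ((1 - α) - fEpsDelta ε δ α) / Real.sqrt 2) '' Set.Icc 0 1)
      = (Real.exp ε - 1 + 2 * δ) / ((1 + Real.exp ε) * Real.sqrt 2) :=
  (epsDelta_tradeoff_separation_general ε δ
    ⟨(neg_nonpos.2 (Real.exp_nonneg ε)).trans hδ.1, hδ.2.le⟩).imp_right IsGreatest.csSup_eq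
end
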